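/- arXiv:1901.02060 — 5 statements merged into one kernel-verified Lean document; each statement's English description precedes it below -/
import Mathlib

section
/- Let S be a Euclidean domain and let A be a finitely generated S-module, so that A is isomorphic to S^m ⊕ TA for some m ≥ 0, where TA is the torsion submodule of A. Let B be a submodule of A, let q : A → A/B be the quotient map, and suppose C is a submodule of A/B whose generating rank ℓ = grr_S(C) satisfies ℓ > m. Then there exists a submodule C' of A/B with C' ⊆ C, with C' contained in q(TA) (the image of the torsion submodule of A in A/B), and with generating rank grr_S(C') = ℓ − m. -/
/-- The generating rank of a module `M` over a commutative ring `S`: the minimal number of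
elements needed to generate `M` as an `S`-module. -/
noncomputable def grr (S : Type) [CommRing S] (M : Type) [AddCommGroup M] [Module S M] : ℕ :=
  sInf {n : ℕ | ∃ s : Finset M, s.card = n ∧ Submodule.span S (s : Set M) = ⊤}

theorem grr_eq_aux (S : Type) [CommRing S] (M : Type) [AddCommGroup M] [Module S M]
    (N : Submodule S M) (hN : N.FG) : 
    (∃ s : Finset M, s.card = grr S N ∧ Submodule.span S (s : Set M) = N) ∧
    ∀ s : Finset M, Submodule.span S (s : Set M) = N → grr S N ≤ s.card := by
  classical
  constructor
  · have hne : {n : ℕ | ∃ s : Finset N, s.card = n ∧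
        Submodule.span S (s : Set N) = ⊤}.Nonempty := by
      have : Module.Finite S N := Module.Finite.iff_fg.2 hN
      obtain ⟨s, hs⟩ := Module.Finite.fg_top (R := S) (M := N)
      exact ⟨_, s, rfl, hs⟩
    obtain ⟨s, hc, hs⟩ := Nat.sInf_mem hne
    refine ⟨s.image N.subtype, ?_, ?_⟩
    · rw [Finset.card_image_of_injective _ N.injective_subtype]; exact hc
    · rw [Finset.coe_image, Submodule.span_image, hs, Submodule.map_top, Submodule.range_subtype]
  · intro s hs
    have hsub : ∀ x ∈ s, x ∈ N := fun x hx => hs ▸ Submodule.subset_span hx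
    refine Nat.sInf_le ⟨s.attach.image (fun x => (⟨x.1, hsub x.1 x.2⟩ : N)), ?_, ?_⟩
    · rw [Finset.card_image_of_injective, Finset.card_attach]
      intro x y h
      exact Subtype.ext (congrArg (fun z : N => (z : M)) h)
    · apply Submodule.map_injective_of_injective N.injective_subtype
      rw [← Submodule.span_image, Submodule.map_top, Submodule.range_subtype]
      conv_rhs => rw [← hs]
      congr 1
      ext x
      simp only [Finset.coe_image, Set.mem_image, Finset.mem_coe, Finset.mem_attach, true_and]
      constructor
      · rintro ⟨_, ⟨y, rfl⟩, rfl⟩; exact y.2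
      · intro hx; exact ⟨_, ⟨⟨x, hx⟩, rfl⟩, rfl⟩

theorem sub_gen_aux (S : Type) [EuclideanDomain S] (m : ℕ) (E : Submodule S (Fin m → S)) :
    ∃ s : Finset (Fin m → S), s.card ≤ m ∧ Submodule.span S (s : Set (Fin m → S)) = E := by
  classical
  have h1 : Module.finrank S E ≤ m := by simpa using E.finrank_le
  let b := Module.finBasis S E
  refine ⟨Finset.univ.image (fun i => (b i : Fin m → S)), ?_, ?_⟩
  · exact Finset.card_image_le.trans (by simpa using h1)
  · have : ((Finset.univ.image (fun i => (b i : Fin m → S)) : Finset _) : Set (Fin m → S))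
        = E.subtype '' Set.range b := by
      ext x; simp
    rw [this, Submodule.span_image, b.span_eq, Submodule.map_top, Submodule.range_subtype]

/-- Let `S` be a Euclidean domain and `A` a finitely generated `S`-module, isomorphic to
`S^m ⊕ TA` where `TA` is the torsion submodule of `A`.  Let `B ≤ A` be a submodule,
`q : A → A/B` the quotient map, and `C` a submodule of `A/B` of generating rank `ℓ > m`.
Then there is a submodule `C' ⊆ C` of `A/B` contained in `q(TA)` with generating rank
`ℓ − m`. -/
theorem stmt_4 (S : Type) [EuclideanDomain S]
    (A : Type) [AddCommGroup A] [Module S A] [Module.Finite S A]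
    (m : ℕ) (hiso : Nonempty (A ≃ₗ[S] ((Fin m → S) × ↥(Submodule.torsion S A))))
    (B : Submodule S A) (C : Submodule S (A ⧸ B))
    (ℓ : ℕ) (hℓ : grr S ↥C = ℓ) (hlm : m < ℓ) :
    ∃ C' : Submodule S (A ⧸ B), C' ≤ C ∧
      C' ≤ (Submodule.torsion S A).map B.mkQ ∧
      grr S ↥C' = ℓ - m := by
  classical
  obtain ⟨e⟩ := hiso
  have hfg : ∀ N : Submodule S (A ⧸ B), N.FG := fun N => IsNoetherian.noetherian N
  set T := (Submodule.torsion S A).map B.mkQ with hT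
  let g : (Fin m → S) →ₗ[S] (A ⧸ B) := B.mkQ ∘ₗ e.symm.toLinearMap ∘ₗ LinearMap.inl S _ _
  have hg : ∀ x : A ⧸ B, ∃ v, x - g v ∈ T := by
    intro x
    obtain ⟨a, rfl⟩ := B.mkQ_surjective x
    refine ⟨(e a).1, ?_⟩
    refine ⟨e.symm (0, (e a).2), ?_, ?_⟩
    · obtain ⟨r, hr⟩ := (Submodule.mem_torsion_iff _).1 (e a).2.2
      refine (Submodule.mem_torsion_iff _).2 ⟨r, ?_⟩
      have h0 : r • (e a).2 = 0 := Subtype.ext hr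
      have h1 : (r : S) • (e a).2 = 0 := h0
      change (r : S) • e.symm (0, (e a).2) = 0
      rw [← map_smul, Prod.smul_mk, h1, smul_zero]
      exact map_zero e.symm
    · change B.mkQ _ = B.mkQ a - B.mkQ (e.symm ((e a).1, 0))
      rw [← map_sub]
      congr 1
      apply e.injective
      rw [map_sub]
      ext <;> simp
  -- generators of C modulo T
  obtain ⟨t, htm, hts⟩ := sub_gen_aux S m ((C ⊔ T).comap g)
  have hlift : ∀ v : Fin m → S, ∃ c : A ⧸ B, v ∈ t → c ∈ C ∧ g v - c ∈ T := by
    intro v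
    by_cases hv : v ∈ t
    · have : v ∈ (C ⊔ T).comap g := hts ▸ Submodule.subset_span hv
      obtain ⟨c, hc, d, hd, h⟩ := Submodule.mem_sup.1 (Submodule.mem_comap.1 this)
      exact ⟨c, fun _ => ⟨hc, by rw [← h]; simpa using hd⟩⟩
    · exact ⟨0, fun h => absurd h hv⟩
  choose h hh using hlift
  have hUC : Submodule.span S ((t.image h : Finset (A ⧸ B)) : Set (A ⧸ B)) ≤ C := by
    rw [Submodule.span_le]
    intro x hx
    obtain ⟨v, hv, rfl⟩ := Finset.mem_image.1 (Finset.mem_coe.1 hx)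
    exact (hh v hv).1
  set U := Submodule.span S ((t.image h : Finset (A ⧸ B)) : Set (A ⧸ B)) with hU
  have hsup : U ⊔ (C ⊓ T) = C := by
    apply le_antisymm (sup_le hUC inf_le_left)
    intro x hx
    obtain ⟨v, hv⟩ := hg x
    have hvE : v ∈ (C ⊔ T).comap g := by
      rw [Submodule.mem_comap]
      have : g v = x - (x - g v) := by abel
      rw [this]
      exact sub_mem (Submodule.mem_sup_left hx) (Submodule.mem_sup_right hv)
    have hle : (C ⊔ T).comap g ≤ (U ⊔ T).comap g := by
      rw [← hts, Submodule.span_le]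
      intro w hw
      have hw' : w ∈ t := hw
      change g w ∈ U ⊔ T
      have : g w = h w + (g w - h w) := by abel
      rw [this]
      exact add_mem (Submodule.mem_sup_left (Submodule.subset_span
        (Finset.mem_coe.2 (Finset.mem_image_of_mem h hw')))) (Submodule.mem_sup_right (hh w hw').2)
    have h2 : x ∈ U ⊔ T := by
      have : x = g v + (x - g v) := by abel
      rw [this]
      exact add_mem (hle hvE) (Submodule.mem_sup_right hv)
    obtain ⟨u, hu, d, hd, hud⟩ := Submodule.mem_sup.1 h2
    refine Submodule.mem_sup.2 ⟨u, hu, d, ⟨?_, hd⟩, hud⟩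
    have : d = x - u := by rw [← hud]; abel
    rw [this]
    exact sub_mem hx (hUC hu)
  obtain ⟨⟨s, hsc, hss⟩, hsmin⟩ := grr_eq_aux S _ (C ⊓ T) (hfg _)
  have hCmin := (grr_eq_aux S _ C (hfg _)).2
  have hge : ℓ - m ≤ s.card := by
    have h1 := hCmin (t.image h ∪ s) (by
      rw [Finset.coe_union, Submodule.span_union, hss]; exact hsup)
    have h2 := Finset.card_union_le (t.image h) s
    have h3 : (t.image h).card ≤ t.card := Finset.card_image_le
    omega
  obtain ⟨k, hks, hkc⟩ := Finset.exists_subset_card_eq hge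
  have hkle : Submodule.span S (k : Set (A ⧸ B)) ≤ C ⊓ T := by
    rw [← hss]; exact Submodule.span_mono (by exact_mod_cast hks)
  refine ⟨Submodule.span S (k : Set (A ⧸ B)), hkle.trans inf_le_left, hkle.trans inf_le_right, ?_⟩
  obtain ⟨⟨k', hkc', hks'⟩, hkmin⟩ := grr_eq_aux S _ (Submodule.span S (k : Set (A ⧸ B))) (hfg _)
  have h1 := hkmin k rfl
  have h2 := hsmin (k' ∪ (s \ k)) (by
    rw [Finset.coe_union, Submodule.span_union, hks', ← Submodule.span_union, ← Finset.coe_union,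
      Finset.union_sdiff_of_subset hks, hss])
  have h3 := Finset.card_union_le k' (s \ k)
  have h4 := Finset.card_sdiff_add_card_eq_card hks
  omega
end

section
/- Let S be a commutative principal ideal domain with field of fractions Q, and let Q/S denote the quotient S-module Q ⧸ (image of S in Q). For an S-module M write M^∧ := Hom_S(M, Q/S), and for an S-linear map g write g^∧ := Hom_S(g, Q/S). If g : A → B is an S-linear map between finitely generated torsion S-modules, then the cokernel of g^∧ : B^∧ → A^∧ is isomorphic as an S-module to ker(g). -/
/-- For a commutative PID `S` with field of fractions `Q`, this is the quotient `S`-module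
`Q/S`, i.e. `Q` modulo the image of `S` in `Q`. -/
abbrev QmodS (S : Type) [CommRing S] [IsDomain S] : Type :=
  FractionRing S ⧸ LinearMap.range (Algebra.linearMap S (FractionRing S))

theorem qmods_div (S : Type) [CommRing S] [IsDomain S] (m : S) (hm : m ≠ 0) (x : QmodS S) :
    ∃ y : QmodS S, m • y = x := by
  obtain ⟨q, rfl⟩ := Submodule.mkQ_surjective _ x
  have hm' : algebraMap S (FractionRing S) m ≠ 0 := by
    simpa using hm
  refine ⟨Submodule.mkQ _ (q / algebraMap S (FractionRing S) m), ?_⟩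
  rw [← map_smul, Algebra.smul_def, mul_div_cancel₀ _ hm']

theorem qmods_baer (S : Type) [CommRing S] [IsDomain S] [IsPrincipalIdealRing S] :
    Module.Baer S (QmodS S) := fun I g ↦ by
  rcases IsPrincipalIdealRing.principal I with ⟨m, rfl⟩
  obtain rfl | h0 := eq_or_ne m 0
  · refine ⟨0, fun n hn ↦ ?_⟩
    rw [Submodule.span_zero_singleton] at hn
    have hn' : n = 0 := hn
    subst hn'
    exact (map_zero g).symm
  obtain ⟨y, hy⟩ := qmods_div S m h0 (g ⟨m, Submodule.subset_span (Set.mem_singleton _)⟩)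
  refine ⟨LinearMap.toSpanSingleton S _ y, fun n hn ↦ ?_⟩
  rcases Submodule.mem_span_singleton.mp hn with ⟨n, rfl⟩
  rw [map_smul, LinearMap.toSpanSingleton_apply, hy, ← map_smul g, SetLike.mk_smul_mk]

theorem dual_cyclic (S : Type) [CommRing S] [IsDomain S] (a : S) (ha : a ≠ 0) :
    Nonempty (((S ⧸ Submodule.span S {a}) →ₗ[S] QmodS S) ≃ₗ[S] (S ⧸ Submodule.span S {a})) := by
  have ha' : algebraMap S (FractionRing S) a ≠ 0 := by
    simpa using ha
  let c : QmodS S := Submodule.mkQ _ (algebraMap S (FractionRing S) a)⁻¹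
  have hc : a • c = 0 := by
    change a • Submodule.mkQ _ _ = _
    rw [← map_smul, Algebra.smul_def, mul_inv_cancel₀ ha', Submodule.mkQ_apply,
      Submodule.Quotient.mk_eq_zero]
    exact ⟨1, by simp⟩
  let h0 : (S ⧸ Submodule.span S {a}) →ₗ[S] QmodS S :=
    Submodule.liftQ _ (LinearMap.toSpanSingleton S _ c) (by
      rw [Submodule.span_singleton_le_iff_mem, LinearMap.mem_ker,
        LinearMap.toSpanSingleton_apply, hc])
  have hh0 : h0 (Submodule.mkQ _ 1) = c := by
    change LinearMap.toSpanSingleton S _ c 1 = c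
    simp
  have hext : ∀ f f' : (S ⧸ Submodule.span S {a}) →ₗ[S] QmodS S,
      f (Submodule.mkQ _ 1) = f' (Submodule.mkQ _ 1) → f = f' := by
    intro f f' h
    apply Submodule.linearMap_qext
    apply LinearMap.ext_ring
    exact h
  let T := LinearMap.toSpanSingleton S _ h0
  have hT : Function.Surjective T := by
    intro f
    obtain ⟨q, hq⟩ := Submodule.mkQ_surjective _ (f (Submodule.mkQ _ 1))
    have h1 : a • f (Submodule.mkQ _ 1) = 0 := by
      rw [← map_smul, ← map_smul]
      have : (Submodule.mkQ (Submodule.span S {a})) (a • (1 : S)) = 0 := by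
        rw [Submodule.mkQ_apply, Submodule.Quotient.mk_eq_zero]
        simpa using Submodule.mem_span_singleton_self a
      rw [this, map_zero]
    rw [← hq, ← map_smul, Submodule.mkQ_apply, Submodule.Quotient.mk_eq_zero] at h1
    obtain ⟨s, hs⟩ := h1
    refine ⟨s, hext _ _ ?_⟩
    change s • h0 (Submodule.mkQ _ 1) = _
    rw [hh0, ← hq]
    change s • Submodule.mkQ _ _ = _
    rw [← map_smul]
    congr 1
    rw [Algebra.linearMap_apply, Algebra.smul_def] at hs
    rw [Algebra.smul_def, hs]
    field_simp
  have hk : LinearMap.ker T = Submodule.span S {a} := by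
    ext s
    rw [LinearMap.mem_ker, Submodule.mem_span_singleton]
    have e1 : T s = 0 ↔ s • c = 0 := by
      constructor
      · intro h
        rw [← hh0]
        exact congrArg (fun f => f (Submodule.mkQ _ 1)) h
      · intro h
        apply hext
        change s • h0 (Submodule.mkQ _ 1) = 0
        rw [hh0, h]
    rw [e1]
    change s • Submodule.mkQ _ _ = _ ↔ _
    rw [← map_smul, Submodule.mkQ_apply, Submodule.Quotient.mk_eq_zero]
    constructor
    · rintro ⟨t, ht⟩
      refine ⟨t, ?_⟩
      apply IsFractionRing.injective S (FractionRing S)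
      rw [Algebra.linearMap_apply, Algebra.smul_def] at ht
      rw [smul_eq_mul, map_mul, ht]
      field_simp
    · rintro ⟨t, rfl⟩
      refine ⟨t, ?_⟩
      rw [Algebra.linearMap_apply, Algebra.smul_def, smul_eq_mul, map_mul]
      field_simp
  exact ⟨((Submodule.quotEquivOfEq _ _ hk.symm).trans
    (T.quotKerEquivOfSurjective hT)).symm⟩

theorem dual_torsion (S : Type) [CommRing S] [IsDomain S] [IsPrincipalIdealRing S]
    (M : Type) [AddCommGroup M] [Module S M] [Module.Finite S M] (hM : Module.IsTorsion S M) :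
    Nonempty ((M →ₗ[S] QmodS S) ≃ₗ[S] M) := by
  classical
  obtain ⟨ι, _, p, hp, e, ⟨E⟩⟩ := Module.equiv_directSum_of_isTorsion hM
  have key := fun i => dual_cyclic S (p i ^ e i) (pow_ne_zero _ (hp i).ne_zero)
  let F := E.trans (DirectSum.linearEquivFunOnFintype S ι
    (fun i => S ⧸ Submodule.span S {p i ^ e i}))
  exact ⟨((F.congrLeft (M := QmodS S) S).trans
    ((LinearMap.lsum S (fun i => S ⧸ Submodule.span S {p i ^ e i}) S).symm.trans
      (LinearEquiv.piCongrRight fun i => (key i).some))).trans F.symm⟩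

/-- Let `S` be a commutative PID with field of fractions `Q`, and write `M^∧ = Hom_S(M, Q/S)`.
If `g : A → B` is an `S`-linear map between finitely generated torsion `S`-modules, then the
cokernel of `g^∧ : B^∧ → A^∧` (where `g^∧` is precomposition with `g`) is isomorphic as an
`S`-module to `ker g`. -/
theorem stmt_5 (S : Type) [CommRing S] [IsDomain S] [IsPrincipalIdealRing S]
    (A B : Type) [AddCommGroup A] [Module S A] [AddCommGroup B] [Module S B]
    [Module.Finite S A] [Module.Finite S B]
    (hA : Module.IsTorsion S A) (hB : Module.IsTorsion S B)
    (g : A →ₗ[S] B) :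
    Nonempty
      (((A →ₗ[S] QmodS S) ⧸ LinearMap.range (LinearMap.lcomp S (QmodS S) g)
        : Type) ≃ₗ[S] ↥(LinearMap.ker g)) := by
  have hker : Module.IsTorsion S (LinearMap.ker g) := by
    intro x
    obtain ⟨a, ha⟩ := @hA (x : A)
    exact ⟨a, Subtype.ext ha⟩
  obtain ⟨D⟩ := dual_torsion S (LinearMap.ker g) hker
  let R := LinearMap.lcomp S (QmodS S) (LinearMap.ker g).subtype
  have hR : Function.Surjective R := fun f =>
    (qmods_baer S).extension_property _ (Submodule.subtype_injective _) f
  have hk : LinearMap.range (LinearMap.lcomp S (QmodS S) g) = LinearMap.ker R := by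
    ext f
    constructor
    · rintro ⟨h, rfl⟩
      rw [LinearMap.mem_ker]
      ext x
      change h (g x) = 0
      rw [x.2, map_zero]
    · intro hf
      have hf' : LinearMap.ker g ≤ LinearMap.ker f := fun x hx =>
        LinearMap.congr_fun (LinearMap.mem_ker.mp hf) (⟨x, hx⟩ : LinearMap.ker g)
      obtain ⟨h, hh⟩ := (qmods_baer S).extension_property
        ((LinearMap.ker g).liftQ g le_rfl)
        (LinearMap.ker_eq_bot.mp (Submodule.ker_liftQ_eq_bot _ _ _ le_rfl))
        ((LinearMap.ker g).liftQ f hf')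
      refine ⟨h, LinearMap.ext fun x => ?_⟩
      exact congrArg (fun u => u (Submodule.mkQ _ x)) hh
  exact ⟨((Submodule.quotEquivOfEq _ _ hk).trans (R.quotKerEquivOfSurjective hR)).trans D⟩
end

section
/- Let p be a prime, let M ≥ 0 and 0 ≤ ℓ ≤ M, and let W be a ℤ/p-linear subspace of (ℤ/p)^M of dimension ℓ. Then W contains a vector at least ℓ of whose coordinates are nonzero, i.e., there exists w ∈ W such that the number of indices i ∈ {1, …, M} with wᵢ ≠ 0 is at least ℓ. -/
/-- Let `p` be a prime, `0 ≤ ℓ ≤ M`, and `W` a `ℤ/p`-linear subspace of `(ℤ/p)^M` of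
dimension `ℓ`.  Then `W` contains a vector at least `ℓ` of whose coordinates are nonzero. -/
theorem stmt_9 (p : ℕ) [Fact p.Prime] (M ℓ : ℕ) (hℓM : ℓ ≤ M)
    (W : Submodule (ZMod p) (Fin M → ZMod p))
    (hW : Module.finrank (ZMod p) W = ℓ) :
    ∃ w ∈ W, ℓ ≤ (Finset.univ.filter fun i : Fin M => w i ≠ 0).card := by
  obtain ⟨w, hw⟩ := Finite.exists_max
    (fun w : W => (Finset.univ.filter fun i : Fin M => w.1 i ≠ 0).card)
  refine ⟨w.1, w.2, ?_⟩
  by_contra! hlt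
  set S := Finset.univ.filter fun i : Fin M => w.1 i ≠ 0 with hS
  let f : W →ₗ[ZMod p] (S → ZMod p) :=
    (LinearMap.funLeft (ZMod p) (ZMod p) (fun i : S => (i : Fin M))).comp W.subtype
  have hker : LinearMap.ker f ≠ ⊥ := by
    apply LinearMap.ker_ne_bot_of_finrank_lt
    rw [hW, Module.finrank_fintype_fun_eq_card, Fintype.card_coe]
    exact hlt
  obtain ⟨v, hv, hv0⟩ := (Submodule.ne_bot_iff _).1 hker
  have hvS : ∀ i ∈ S, v.1 i = 0 := fun i hi => congrFun (LinearMap.mem_ker.1 hv) ⟨i, hi⟩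
  have hex : ∃ j, v.1 j ≠ 0 := by
    by_contra! h
    exact hv0 (Subtype.ext (funext h))
  obtain ⟨j, hj⟩ := hex
  have hjS : j ∉ S := fun h => hj (hvS j h)
  have hwj : w.1 j = 0 := by simpa [hS] using hjS
  refine absurd (hw (w + v)) (not_le.2 (Finset.card_lt_card ?_))
  rw [Finset.ssubset_iff_of_subset]
  · exact ⟨j, by simp [hwj, hj], hjS⟩
  · intro i hi
    have h1 := hvS i hi
    have h2 : w.1 i ≠ 0 := by simpa [hS] using hi
    simp [h1, h2]
end

section
/- Let C be an ℕ-indexed chain complex of finitely generated free ℤ-modules and let p be a prime. Then for every n, dim_ℚ Hₙ(C ⊗_ℤ ℚ) ≤ dim_{ℤ/p} Hₙ(C ⊗_ℤ ℤ/p), where the tensor products are applied degreewise. -/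
open TensorProduct

/-- The dimension of the `n`-th homology of an ℕ-indexed chain complex of vector spaces
over a field `k`, given by modules `X n` and boundary maps `d n : X (n+1) → X n`
(so that `∂_{n+1} = d n`): in degree 0 it is `dim (X 0 / im ∂₁)`, and in degree `n+1` it is
`dim (ker ∂_{n+1} / im ∂_{n+2})`. -/
noncomputable def homologyDim (k : Type) [Field k] (X : ℕ → Type)
    [∀ n, AddCommGroup (X n)] [∀ n, Module k (X n)]
    (d : ∀ n, X (n + 1) →ₗ[k] X n) : ℕ → ℕ
  | 0 => Module.finrank k (X 0 ⧸ LinearMap.range (d 0))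
  | n + 1 =>
    Module.finrank k (↥(LinearMap.ker (d n)) ⧸
      Submodule.comap (LinearMap.ker (d n)).subtype (LinearMap.range (d (n + 1))))

theorem rank_le_aux {R K M N : Type} [CommRing R] [IsDomain R] [IsPrincipalIdealRing R]
    [Field K] [Algebra R K] [Module.Flat R K] [AddCommGroup M] [AddCommGroup N] [Module R M] [Module R N]
    [Module.Free R N] [Module.Finite R M] [Module.Finite R N]
    (f : M →ₗ[R] N) (k : Type) [Field k] [Algebra R k] :
    Module.finrank k (LinearMap.range (f.baseChange k)) ≤
      Module.finrank K (LinearMap.range (f.baseChange K)) := by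
  haveI : Module.Free R (LinearMap.range f) :=
    Submodule.nonempty_basis_of_pid (Module.Free.chooseBasis R N) (LinearMap.range f) |>.elim
      fun _ h => h.elim fun b => Module.Free.of_basis b
  have hf : f = (LinearMap.range f).subtype ∘ₗ f.rangeRestrict := rfl
  have h1 : Module.finrank k (LinearMap.range (f.baseChange k)) ≤
      Module.finrank R (LinearMap.range f) := by
    rw [← Module.finrank_baseChange (R := k) (S := R) (M' := LinearMap.range f)]
    conv_lhs => rw [hf, LinearMap.baseChange_comp]
    refine le_trans (Submodule.finrank_mono (LinearMap.range_comp_le_range _ _)) ?_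
    exact LinearMap.finrank_range_le _
  have h2 : Module.finrank K (LinearMap.range (f.baseChange K)) =
      Module.finrank R (LinearMap.range f) := by
    rw [← Module.finrank_baseChange (R := K) (S := R) (M' := LinearMap.range f)]
    conv_lhs => rw [hf, LinearMap.baseChange_comp]
    rw [LinearMap.range_comp_of_range_eq_top]
    · apply LinearMap.finrank_range_of_inj
      exact Module.Flat.lTensor_preserves_injective_linearMap (M := K) _
        (LinearMap.range f).injective_subtype
    · rw [LinearMap.range_eq_top]
      exact LinearMap.lTensor_surjective K f.surjective_rangeRestrict
  omega

theorem hom_aux {k A B C : Type} [Field k] [AddCommGroup A] [AddCommGroup B] [AddCommGroup C]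
    [Module k A] [Module k B] [Module k C] [FiniteDimensional k B]
    (f : A →ₗ[k] B) (g : B →ₗ[k] C) (h : g ∘ₗ f = 0) :
    Module.finrank k (↥(LinearMap.ker g) ⧸
      Submodule.comap (LinearMap.ker g).subtype (LinearMap.range f)) +
      Module.finrank k (LinearMap.range f) + Module.finrank k (LinearMap.range g) =
      Module.finrank k B := by
  have hle : LinearMap.range f ≤ LinearMap.ker g := LinearMap.range_le_ker_iff.2 h
  have h1 := Submodule.finrank_quotient_add_finrank
    (Submodule.comap (LinearMap.ker g).subtype (LinearMap.range f))
  have h2 := (Submodule.comapSubtypeEquivOfLe hle).finrank_eq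
  have h3 := LinearMap.finrank_range_add_finrank_ker g
  omega

/-- Let `C` be an ℕ-indexed chain complex of finitely generated free ℤ-modules and `p` a
prime.  Then for every `n`, `dim_ℚ Hₙ(C ⊗ ℚ) ≤ dim_{ℤ/p} Hₙ(C ⊗ ℤ/p)`. -/
theorem stmt_13 (X : ℕ → Type) [∀ n, AddCommGroup (X n)] [∀ n, Module ℤ (X n)]
    [∀ n, Module.Free ℤ (X n)] [∀ n, Module.Finite ℤ (X n)]
    (d : ∀ n, X (n + 1) →ₗ[ℤ] X n)
    (hdd : ∀ n, (d n).comp (d (n + 1)) = 0)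
    (p : ℕ) [Fact p.Prime] (n : ℕ) :
    homologyDim ℚ (fun m => ℚ ⊗[ℤ] X m) (fun m => (d m).baseChange ℚ) n ≤
      homologyDim (ZMod p) (fun m => ZMod p ⊗[ℤ] X m)
        (fun m => (d m).baseChange (ZMod p)) n := by
  cases n with
  | zero =>
    simp only [homologyDim]
    have h1 := Submodule.finrank_quotient_add_finrank (LinearMap.range ((d 0).baseChange ℚ))
    have h2 := Submodule.finrank_quotient_add_finrank
      (LinearMap.range ((d 0).baseChange (ZMod p)))
    rw [Module.finrank_baseChange] at h1 h2
    have h3 := rank_le_aux (K := ℚ) (d 0) (ZMod p)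
    omega
  | succ n =>
    simp only [homologyDim]
    have h1 := hom_aux ((d (n + 1)).baseChange ℚ) ((d n).baseChange ℚ)
      (by rw [← LinearMap.baseChange_comp, hdd, LinearMap.baseChange_zero])
    have h2 := hom_aux ((d (n + 1)).baseChange (ZMod p)) ((d n).baseChange (ZMod p))
      (by rw [← LinearMap.baseChange_comp, hdd, LinearMap.baseChange_zero])
    rw [Module.finrank_baseChange] at h1 h2
    have h3 := rank_le_aux (K := ℚ) (d n) (ZMod p)
    have h4 := rank_le_aux (K := ℚ) (d (n + 1)) (ZMod p)
    omega
end

section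
/- Let G be a group and let g ∈ G be an element of infinite order (g^n ≠ 1 for all nonzero integers n). Then left multiplication by the element 1 − g is injective on the integral group ring ℤ[G]; that is, if x ∈ ℤ[G] satisfies (1 − g)·x = 0, then x = 0. -/
/-- Let `G` be a group and `g ∈ G` of infinite order.  Then left multiplication by `1 − g`
is injective on the integral group ring `ℤ[G]`: if `(1 − g)·x = 0` then `x = 0`. -/
theorem stmt_15 (G : Type) [Group G] (g : G)
    (hg : ∀ n : ℤ, n ≠ 0 → g ^ n ≠ 1)
    (x : MonoidAlgebra ℤ G)
    (hx : (1 - MonoidAlgebra.of ℤ G g) * x = 0) :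
    x = 0 := by
  have h1 : x = MonoidAlgebra.single g 1 * x := by
    rw [sub_mul, one_mul, sub_eq_zero] at hx
    exact hx
  have h2 : ∀ h : G, x.coeff (g * h) = x.coeff h := by
    intro h
    have h3 := congrArg (fun y : MonoidAlgebra ℤ G => y.coeff (g * h)) h1
    simpa [MonoidAlgebra.coeff_single_mul_apply] using h3
  have h4 : ∀ (n : ℕ) (h : G), x.coeff (g ^ n * h) = x.coeff h := by
    intro n
    induction n with
    | zero => intro h; simp
    | succ k ih => intro h; rw [pow_succ, mul_assoc, ih, h2]
  ext h
  by_contra hne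
  have hne' : x.coeff h ≠ 0 := hne
  have hinj : Function.Injective (fun n : ℕ => g ^ n * h) := by
    intro m n hmn
    have hmn' : g ^ m = g ^ n := mul_right_cancel hmn
    by_contra hne2
    refine hg ((m : ℤ) - n) (by omega) ?_
    rw [zpow_sub, zpow_natCast, zpow_natCast, hmn', mul_inv_cancel]
  refine Set.infinite_of_injective_forall_mem hinj (s := (x.coeff.support : Set G)) ?_
    (Finset.finite_toSet _)
  intro n
  simp [h4, hne']
end
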